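/- arXiv:math/0303215 — 2 statements merged into one kernel-verified Lean document; each statement's English description precedes it below -/
import Mathlib

section
/- Let r ≥ 1 be an integer, let G = ℤ^r be the free abelian group of rank r (for instance Multiplicative (Fin r → ℤ)), and let ρ : G → ℂˣ be a nontrivial character, with ℂ_ρ the associated one-dimensional representation of G over ℂ in which g acts as scalar multiplication by ρ(g). Then the group homology H_p(G, ℂ_ρ) vanishes for every p ≥ 0. -/
open CategoryTheory

/-- The one-dimensional representation of `G` over `ℂ` attached to a character
`ρ : G →* ℂˣ`, in which `g` acts as scalar multiplication by `ρ g`. -/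
noncomputable def charRep {G : Type} [Group G] (ρ : G →* ℂˣ) : Representation ℂ G ℂ :=
  ((algebraMap ℂ (Module.End ℂ ℂ)).toMonoidHom).comp ((Units.coeHom ℂ).comp ρ)

/-- Group homology `H_p(G, V)` of a commutative group `G` with coefficients in a
representation `V` of `G` over `ℂ`, defined as `Tor_p^{ℂ[G]}(ℂ_triv, V)`. -/
noncomputable def groupHomologyTor {G : Type} [CommGroup G] {V : Type}
    [AddCommGroup V] [Module ℂ V] (ρ : Representation ℂ G V) (p : ℕ) :
    ModuleCat (MonoidAlgebra ℂ G) :=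
  ((Tor (ModuleCat (MonoidAlgebra ℂ G)) p).obj
      (ModuleCat.of (MonoidAlgebra ℂ G)
        (Representation.trivial ℂ (G := G) (V := ℂ)).asModule)).obj
    (ModuleCat.of (MonoidAlgebra ℂ G) ρ.asModule)

open MonoidalCategory in
theorem tor_isZero_aux {R : Type} [CommRing R] (X V : ModuleCat.{0} R) (e : R)
    (hX : ∀ x : X, e • x = 0) (hV : ∀ v : V, e • v = v) (p : ℕ) :
    Limits.IsZero (((Tor (ModuleCat.{0} R) p).obj X).obj V) := by
  have hX' : e • 𝟙 X = 0 := by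
    ext x
    exact hX x
  have hV' : e • 𝟙 V = 𝟙 V := by
    ext v
    exact hV v
  have hF : ∀ Z : ModuleCat.{0} R, X ◁ (e • 𝟙 Z) = 0 := by
    intro Z
    have h1 : (e • 𝟙 X) ▷ Z = 0 := by
      rw [hX']
      exact MonoidalPreadditive.zero_whiskerRight
    rw [MonoidalLinear.whiskerLeft_smul, MonoidalCategory.whiskerLeft_id]
    rw [MonoidalLinear.smul_whiskerRight, MonoidalCategory.id_whiskerRight] at h1
    exact h1
  let P := projectiveResolution V
  have key := Functor.leftDerived_map_eq ((tensoringLeft (ModuleCat.{0} R)).obj X) p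
    (𝟙 V) (P := P) (Q := P) (e • 𝟙 P.complex) (by
      rw [← hV', Linear.smul_comp, Category.id_comp]
      ext : 1
      simp
      ext x
      rfl)
  have h0 : (((tensoringLeft (ModuleCat.{0} R)).obj X).mapHomologicalComplex
      (ComplexShape.down ℕ)).map (e • 𝟙 P.complex) = 0 := by
    ext i : 1
    exact hF (P.complex.X i)
  rw [Functor.comp_map, h0, Functor.map_zero, Limits.zero_comp, Limits.comp_zero,
    CategoryTheory.Functor.map_id] at key
  rw [Limits.IsZero.iff_id_eq_zero]
  exact key

theorem stmt4 (r : ℕ) (hr : 1 ≤ r) (ρ : Multiplicative (Fin r → ℤ) →* ℂˣ)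
    (hρ : ρ ≠ 1) (p : ℕ) :
    Limits.IsZero (groupHomologyTor (charRep ρ) p) := by
  obtain ⟨g, hg⟩ : ∃ g, ρ g ≠ 1 := by
    by_contra! h
    exact hρ (MonoidHom.ext h)
  have hg' : ((ρ g : ℂ) - 1) ≠ 0 := by
    rw [sub_ne_zero]
    exact fun h => hg (Units.ext h)
  refine tor_isZero_aux _ _ (MonoidAlgebra.single g ((ρ g : ℂ) - 1)⁻¹ -
    MonoidAlgebra.single 1 ((ρ g : ℂ) - 1)⁻¹) ?_ ?_ p
  · intro x
    change _ • (show (Representation.trivial ℂ (G := Multiplicative (Fin r → ℤ)) (V := ℂ)).asModule from x) = _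
    rw [sub_smul, Representation.single_smul, Representation.single_smul]
    simp
    exact sub_self (G := ℂ) _
  · intro v
    change _ • (show (charRep ρ).asModule from v) = _
    rw [sub_smul, Representation.single_smul, Representation.single_smul, map_one]
    change ((ρ g : ℂ) - 1)⁻¹ * ((ρ g : ℂ) * (show ℂ from v)) -
      ((ρ g : ℂ) - 1)⁻¹ * (show ℂ from v) = (show ℂ from v)
    field_simp
end

section
/- Let r ≥ 1 be an integer, let G = ℤ^r be the free abelian group of rank r (for instance Multiplicative (Fin r → ℤ)), and let ρ : G → ℂˣ be a nontrivial character, with ℂ_ρ the associated one-dimensional representation of G over ℂ in which g acts as scalar multiplication by ρ(g). Then the group cohomology H^p(G, ℂ_ρ) vanishes for every p ≥ 0. -/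
open CategoryTheory

/-- Action of a group element of a commutative group as a chain map. -/
noncomputable def centralMap {G : Type} [CommGroup G] (K : ChainComplex (Rep.{0} ℂ G) ℕ) (g : G) :
    K ⟶ K where
  f i := (K.X i).applyAsHom g
  comm' _ _ _ := Rep.applyAsHom_comm _ _

theorem isZero_of_central {G : Type} [CommGroup G] (A : Rep.{0} ℂ G) (g : G) (c : ℂ) (hc : c ≠ 1)
    (hA : A.applyAsHom g = c • 𝟙 A) (p : ℕ) : Limits.IsZero (groupCohomology A p) := by
  let P := Rep.barResolution ℂ G
  refine Limits.IsZero.of_iso ?_ (groupCohomologyIso A p P)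
  have H : Homotopy (centralMap P.complex g) (𝟙 P.complex) := by
    refine ProjectiveResolution.liftHomotopy (P := P) (Q := P) (𝟙 _) _ _ ?_ (by simp)
    ext : 1
    have h1 : (Rep.trivial ℂ G ℂ).applyAsHom g = 𝟙 _ := by
      ext; rfl
    have h2 := Rep.applyAsHom_comm (P.π.f 0) g
    have h3 : (((ChainComplex.single₀ (Rep.{0} ℂ G)).obj (Rep.trivial ℂ G ℂ)).X 0).applyAsHom g
        = 𝟙 _ := h1
    rw [h3] at h2
    replace h2 := h2.trans (Category.comp_id _)
    simpa [centralMap] using h2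
  rw [← HomologicalComplex.exactAt_iff_isZero_homology, HomologicalComplex.exactAt_iff,
    ShortComplex.moduleCat_exact_iff]
  intro (φ : P.complex.X p ⟶ A) (hφ : P.complex.d ((ComplexShape.down ℕ).prev p) p ≫ φ = 0)
  have hcomm := H.comm p
  have key : c • φ = P.complex.d p ((ComplexShape.down ℕ).next p) ≫ H.hom _ p ≫ φ + φ := by
    calc c • φ = φ ≫ A.applyAsHom g := by rw [hA]; simp
      _ = (centralMap P.complex g).f p ≫ φ := (Rep.applyAsHom_comm _ _).symm
      _ = _ := by
        rw [hcomm]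
        simp [dNext, prevD, hφ]
  have hc' : c - 1 ≠ 0 := sub_ne_zero.2 hc
  refine ⟨(((c - 1)⁻¹ • (H.hom ((ComplexShape.down ℕ).next p) p ≫ φ) : _ ⟶ A) :), ?_⟩
  change P.complex.d p ((ComplexShape.down ℕ).next p) ≫
    ((c - 1)⁻¹ • (H.hom ((ComplexShape.down ℕ).next p) p ≫ φ)) = φ
  rw [Linear.comp_smul, ← eq_sub_iff_add_eq.2 key.symm |>.symm, inv_smul_eq_iff₀ hc', sub_smul, one_smul]

/-- Let `G = ℤ^r` (`r ≥ 1`) and let `ρ : G → ℂˣ` be a nontrivial character, with `ℂ_ρ`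
the associated one-dimensional representation. Then the group cohomology `H^p(G, ℂ_ρ)`
vanishes for every `p ≥ 0`. -/
theorem groupCohomology_zpow_char_isZero (r : ℕ) (hr : 1 ≤ r)
    (ρ : Multiplicative (Fin r → ℤ) →* ℂˣ) (hρ : ρ ≠ 1) (p : ℕ) :
    Limits.IsZero (groupCohomology (Rep.of (charRep ρ)) p) := by
  obtain ⟨g, hg⟩ : ∃ g, ρ g ≠ 1 := by
    by_contra! h
    exact hρ (MonoidHom.ext h)
  refine isZero_of_central _ g (ρ g : ℂ) (by simpa using hg) ?_ p
  ext
  change charRep ρ g (1 : ℂ) = (ρ g : ℂ) • (1 : ℂ)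
  simp [charRep]
end
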